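/- arXiv:2604.27397 — 3 statements merged into one kernel-verified Lean document; each statement's English description precedes it below -/
import Mathlib

section
/- Let U = e^{Vθ} be a unit paravector in $R^{n+1} ⊂ Cl(0,n) that is not real, where V ∈ R^{0,n} is a unit vector. Then the set of paravectors W fixed by the action σ(U): W ↦ U W U^* is exactly the set of vectors W ∈ R^{0,n} orthogonal to U (i.e. with U · W = 0). -/
open CliffordAlgebra

noncomputable section

namespace PaperCliff

noncomputable instance : Invertible (2 : ℝ) := invertibleOfNonzero two_ne_zero

/-- The quadratic form on `ℝ^{p,q}`: `p` generators of square `+1`, `q` of square `-1`. -/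
def sigQ (p q : ℕ) : QuadraticForm ℝ (Fin (p + q) → ℝ) :=
  QuadraticMap.weightedSumSquares ℝ
    (fun i : Fin (p + q) => if (i : ℕ) < p then (1 : ℝ) else -1)

/-- The negative-definite quadratic form for `Cl(0,n)`. -/
def negQ (n : ℕ) : QuadraticForm ℝ (Fin n → ℝ) :=
  QuadraticMap.weightedSumSquares ℝ (fun _ : Fin n => (-1 : ℝ))

variable {M : Type*} [AddCommGroup M] [Module ℝ M]

/-- Clifford conjugation: composite of the grade involution and reversal. -/
def cconj {Q : QuadraticForm ℝ M} (x : CliffordAlgebra Q) : CliffordAlgebra Q :=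
  reverse (involute x)

/-- The paravectors `ℝ ⊕ ℝ^{p,q}` inside the Clifford algebra. -/
def paravec (Q : QuadraticForm ℝ M) : Submodule ℝ (CliffordAlgebra Q) :=
  LinearMap.range (Algebra.linearMap ℝ (CliffordAlgebra Q)) ⊔ LinearMap.range (ι Q)

/-- The real (degree-zero) component of an element of the Clifford algebra,
via the canonical linear isomorphism with the exterior algebra. -/
def clRe {Q : QuadraticForm ℝ M} (x : CliffordAlgebra Q) : ℝ :=
  ExteriorAlgebra.algebraMapInv (CliffordAlgebra.equivExterior Q x)

/-- The reduced basis monomial `i_{j₁} ⋯ i_{j_k}` for a finite set of indices (in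
increasing order). -/
def mono {m : ℕ} (Q : QuadraticForm ℝ (Fin m → ℝ)) (s : Finset (Fin m)) :
    CliffordAlgebra Q :=
  ((s.sort (· ≤ ·)).map fun j => ι Q (Pi.single j 1)).prod

/-- The (paravector) Lipschitz group, as a subgroup of the units: the group generated by
invertible paravectors. -/
def lipUnits (Q : QuadraticForm ℝ M) : Subgroup (CliffordAlgebra Q)ˣ :=
  Subgroup.closure {u : (CliffordAlgebra Q)ˣ | (u : CliffordAlgebra Q) ∈ paravec Q}

/-- The underlying set of the paravector Lipschitz group `$Γ`. -/
def lipGrp (Q : QuadraticForm ℝ M) : Set (CliffordAlgebra Q) :=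
  {x | ∃ u ∈ lipUnits Q, (u : CliffordAlgebra Q) = x}

/-- The Lipschitz monoid `$Γ^▷ = $Γ ∪ {0}`. -/
def lipMon (Q : QuadraticForm ℝ M) : Set (CliffordAlgebra Q) :=
  insert 0 (lipGrp Q)

/-- A Lipschitz spinor: a pair of elements of the Lipschitz monoid, not both zero,
with `ξ ⬝ conj η` a paravector. -/
def IsSpinor (Q : QuadraticForm ℝ M) (ξ η : CliffordAlgebra Q) : Prop :=
  ξ ∈ lipMon Q ∧ η ∈ lipMon Q ∧ ¬(ξ = 0 ∧ η = 0) ∧ ξ * cconj η ∈ paravec Q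

/-- Membership in `SL(2, $Γ)`: entries in the Lipschitz monoid, pseudo-determinant
`a^* d - c^* b = 1`, and `a b^*, c d^*, c^* a, d^* b` paravectors. -/
def IsSL2 (Q : QuadraticForm ℝ M) (a b c d : CliffordAlgebra Q) : Prop :=
  a ∈ lipMon Q ∧ b ∈ lipMon Q ∧ c ∈ lipMon Q ∧ d ∈ lipMon Q ∧
    reverse a * d - reverse c * b = 1 ∧
    a * reverse b ∈ paravec Q ∧ c * reverse d ∈ paravec Q ∧
    reverse c * a ∈ paravec Q ∧ reverse d * b ∈ paravec Q

/-!
Clifford conjugation is an anti-automorphism, and `X * Y + conj (X * Y) = 2 Re (X * Y)` for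
paravectors `X`, `Y`. Hence `U W U = 2 Re (U W) U - conj W` whenever `U` is a unit paravector, and
`U W U = W` says that `2 Re (U W) U = W + conj W` is real. As `U` is not real, this forces
`Re (U W) = 0` and `Re W = 0`; the latter means that `W` is a vector, so that `conj W = -W` and the
former is orthogonality to `U`.
-/

theorem smul_eq_algebraMap_iff {K A : Type*} [Field K] [Ring A] [Nontrivial A] [Algebra K A]
    {x : A} (hx : x ∉ Set.range (algebraMap K A)) {r s : K} :
    r • x = algebraMap K A s ↔ r = 0 ∧ s = 0 := by
  refine ⟨fun h => ?_, fun ⟨hr, hs⟩ => by simp [hr, hs]⟩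
  have hr : r = 0 := by
    by_contra hr
    refine hx ⟨r⁻¹ * s, ?_⟩
    rw [map_mul, ← h, ← Algebra.smul_def, inv_smul_smul₀ hr]
  rw [hr, zero_smul, eq_comm, map_eq_zero] at h
  exact ⟨hr, h⟩

section Paravectors

variable {Q : QuadraticForm ℝ M}

theorem cconj_add (x y : CliffordAlgebra Q) : cconj (x + y) = cconj x + cconj y := by
  simp [cconj]

theorem cconj_mul (x y : CliffordAlgebra Q) : cconj (x * y) = cconj y * cconj x := by
  simp [cconj]

@[simp]
theorem cconj_algebraMap (a : ℝ) :
    cconj (algebraMap ℝ (CliffordAlgebra Q) a) = algebraMap ℝ (CliffordAlgebra Q) a := by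
  simp [cconj]

@[simp]
theorem cconj_ι (v : M) : cconj (ι Q v) = -ι Q v := by
  simp [cconj]

theorem clRe_add (x y : CliffordAlgebra Q) : clRe (x + y) = clRe x + clRe y := by
  simp [clRe]

theorem clRe_neg (x : CliffordAlgebra Q) : clRe (-x) = -clRe x := by
  simp [clRe]

@[simp]
theorem clRe_algebraMap (a : ℝ) : clRe (algebraMap ℝ (CliffordAlgebra Q) a) = a := by
  rw [clRe, equivExterior, changeFormEquiv_apply, changeForm_algebraMap]
  exact ExteriorAlgebra.algebraMap_leftInverse M a

@[simp]
theorem clRe_ι (v : M) : clRe (ι Q v) = 0 := by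
  rw [clRe, equivExterior, changeFormEquiv_apply, changeForm_ι]
  simp [ExteriorAlgebra.algebraMapInv]

theorem two_mul_clRe_ι_mul_ι (v w : M) :
    2 * clRe (ι Q v * ι Q w) = QuadraticMap.polar Q v w := by
  have hre : clRe (ι Q v * ι Q w) = QuadraticMap.associated (R := ℝ) Q v w := by
    rw [clRe, equivExterior, changeFormEquiv_apply, changeForm_ι_mul_ι]
    -- `CliffordAlgebra 0` and `ExteriorAlgebra` agree by unfolding, but only for the latter is
    -- `algebraMapInv` recognised as an algebra homomorphism.
    change ExteriorAlgebra.algebraMapInv (ExteriorAlgebra.ι ℝ v * ExteriorAlgebra.ι ℝ w -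
      algebraMap ℝ (ExteriorAlgebra ℝ M) (QuadraticMap.associated (R := ℝ) (-Q) v w)) = _
    simp [ExteriorAlgebra.algebraMapInv]
  rw [hre, ← smul_eq_mul, QuadraticMap.associated_apply]
  simp [QuadraticMap.polar]

theorem mem_paravec {x : CliffordAlgebra Q} :
    x ∈ paravec Q ↔ ∃ (a : ℝ) (v : M), algebraMap ℝ (CliffordAlgebra Q) a + ι Q v = x := by
  simp [paravec, Submodule.mem_sup]

theorem one_mem_paravec : 1 ∈ paravec Q :=
  mem_paravec.2 ⟨1, 0, by simp⟩

theorem reverse_of_mem_paravec {x : CliffordAlgebra Q} (hx : x ∈ paravec Q) : reverse x = x := by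
  obtain ⟨a, v, rfl⟩ := mem_paravec.1 hx
  simp

theorem mul_add_cconj_mul_of_mem_paravec {x y : CliffordAlgebra Q} (hx : x ∈ paravec Q)
    (hy : y ∈ paravec Q) :
    x * y + cconj (x * y) = algebraMap ℝ (CliffordAlgebra Q) (2 * clRe (x * y)) := by
  obtain ⟨a, v, rfl⟩ := mem_paravec.1 hx
  obtain ⟨b, w, rfl⟩ := mem_paravec.1 hy
  have hmul : (algebraMap ℝ (CliffordAlgebra Q) a + ι Q v) * (algebraMap ℝ _ b + ι Q w) =
      algebraMap ℝ _ (a * b) + ι Q (a • w + b • v) + ι Q v * ι Q w := by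
    simp only [map_add, map_smul, map_mul, add_mul, mul_add, Algebra.smul_def,
      Algebra.commutes b (ι Q v)]
    abel
  have hcross : ι Q v * ι Q w + ι Q w * ι Q v =
      algebraMap ℝ _ (2 * clRe (ι Q v * ι Q w)) := by
    rw [ι_mul_ι_add_swap, two_mul_clRe_ι_mul_ι]
  have hconj : cconj (algebraMap ℝ _ (a * b) + ι Q (a • w + b • v) + ι Q v * ι Q w) =
      algebraMap ℝ _ (a * b) - ι Q (a • w + b • v) + ι Q w * ι Q v := by
    rw [cconj_add, cconj_add, cconj_mul, cconj_algebraMap, cconj_ι, cconj_ι, cconj_ι, neg_mul_neg,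
      sub_eq_add_neg]
  rw [hmul, hconj, clRe_add, clRe_add, clRe_algebraMap, clRe_ι, add_zero, mul_add,
    map_add (algebraMap ℝ _), ← hcross, two_mul, map_add (algebraMap ℝ _)]
  abel

theorem add_cconj_of_mem_paravec {x : CliffordAlgebra Q} (hx : x ∈ paravec Q) :
    x + cconj x = algebraMap ℝ (CliffordAlgebra Q) (2 * clRe x) := by
  simpa using mul_add_cconj_mul_of_mem_paravec hx one_mem_paravec

theorem commute_cconj_of_mem_paravec {x : CliffordAlgebra Q} (hx : x ∈ paravec Q) :
    Commute x (cconj x) := by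
  rw [eq_sub_of_add_eq' (add_cconj_of_mem_paravec hx)]
  exact (Algebra.commute_algebraMap_right _ x).sub_right (Commute.refl x)

theorem exists_eq_ι_iff_clRe_eq_zero {x : CliffordAlgebra Q} (hx : x ∈ paravec Q) :
    (∃ v : M, x = ι Q v) ↔ clRe x = 0 := by
  obtain ⟨a, v, rfl⟩ := mem_paravec.1 hx
  constructor
  · rintro ⟨w, hw⟩
    rw [hw, clRe_ι]
  · intro h
    have ha : a = 0 := by simpa [clRe_add] using h
    exact ⟨v, by simp [ha]⟩

theorem mul_mul_self_of_mul_cconj_eq_one {u w : CliffordAlgebra Q} (hu : u ∈ paravec Q)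
    (hw : w ∈ paravec Q) (hunit : u * cconj u = 1) :
    u * w * u = (2 * clRe (u * w)) • u - cconj w := by
  calc u * w * u = (u * w + cconj (u * w)) * u - cconj w * (cconj u * u) := by
        rw [cconj_mul]
        noncomm_ring
    _ = (2 * clRe (u * w)) • u - cconj w := by
        rw [mul_add_cconj_mul_of_mem_paravec hu hw, ← (commute_cconj_of_mem_paravec hu).eq, hunit,
          mul_one, Algebra.smul_def]

theorem algebraMap_add_smul_ι_mem_paravec (c s : ℝ) (v : M) :
    algebraMap ℝ (CliffordAlgebra Q) c + s • ι Q v ∈ paravec Q :=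
  mem_paravec.2 ⟨c, s • v, by rw [map_smul]⟩

theorem algebraMap_add_smul_ι_mul_cconj {v : M} (hv : ι Q v * ι Q v = -1) (c s : ℝ) :
    (algebraMap ℝ (CliffordAlgebra Q) c + s • ι Q v) *
      cconj (algebraMap ℝ (CliffordAlgebra Q) c + s • ι Q v) =
        algebraMap ℝ (CliffordAlgebra Q) (c ^ 2 + s ^ 2) := by
  rw [← map_smul, cconj_add, cconj_algebraMap, cconj_ι, map_smul]
  simp only [Algebra.algebraMap_eq_smul_one, add_mul, mul_add, mul_neg, smul_mul_assoc,
    mul_smul_comm, one_mul, mul_one, hv]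
  module

theorem fixed_points_of_rotation_general {U : CliffordAlgebra Q} (hU : U ∈ paravec Q)
    (hunit : U * cconj U = 1) (hUnotreal : U ∉ Set.range (algebraMap ℝ (CliffordAlgebra Q)))
    {W : CliffordAlgebra Q} (hW : W ∈ paravec Q) :
    U * W * reverse U = W ↔ (∃ w : M, W = ι Q w) ∧ clRe (U * cconj W) = 0 := by
  have hfixed : U * W * reverse U = W ↔ clRe W = 0 ∧ clRe (U * W) = 0 := by
    rw [reverse_of_mem_paravec hU, mul_mul_self_of_mul_cconj_eq_one hU hW hunit, sub_eq_iff_eq_add,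
      add_cconj_of_mem_paravec hW, smul_eq_algebraMap_iff hUnotreal]
    simp [and_comm]
  rw [hfixed, ← exists_eq_ι_iff_clRe_eq_zero hW]
  refine and_congr_right ?_
  rintro ⟨w, rfl⟩
  rw [cconj_ι, mul_neg, clRe_neg, neg_eq_zero]

end Paravectors

/-- Let `U = e^{Vθ} = cos θ + V sin θ` be a unit paravector in
`Cl(0,n)` which is not real, where `V` is a unit vector. The paravectors `W` fixed by
`σ(U) : W ↦ U W U^*` are exactly the vectors `W ∈ ℝ^{0,n}` orthogonal to `U`
(i.e. with `U · W = Re(U conj W) = 0`). -/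
theorem fixed_points_of_rotation (n : ℕ) (v : Fin n → ℝ)
    (hv : ι (negQ n) v * ι (negQ n) v = -1) (θ : ℝ)
    (U : CliffordAlgebra (negQ n))
    (hU : U = algebraMap ℝ (CliffordAlgebra (negQ n)) (Real.cos θ) +
      Real.sin θ • ι (negQ n) v)
    (hUnotreal : U ∉ Set.range (algebraMap ℝ (CliffordAlgebra (negQ n)))) :
    ∀ W ∈ paravec (negQ n),
      (U * W * reverse U = W ↔
        (∃ w : Fin n → ℝ, W = ι (negQ n) w) ∧ clRe (U * cconj W) = 0) := by
  intro W hW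
  subst hU
  exact fixed_points_of_rotation_general (algebraMap_add_smul_ι_mem_paravec _ _ v)
    (by rw [algebraMap_add_smul_ι_mul_cconj hv, Real.cos_sq_add_sin_sq, map_one]) hUnotreal hW

end PaperCliff
end
end

section
/- The bracket {D_1, D_2} = x_1^* y_2 − y_1^* x_2 on pairs D_m = (x_m, y_m) ∈ Cl(0,n)^2 satisfies the twisted antisymmetry {D_2, D_1} = −{D_1, D_2}^*, and is preserved by the left action of SL(2, $Γ_{n+1}): {A D_1, A D_2} = {D_1, D_2} for all A ∈ SL(2, $Γ_{n+1}). -/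
open CliffordAlgebra

noncomputable section

namespace PaperCliff

variable {M : Type*} [AddCommGroup M] [Module ℝ M]

/-!
A matrix with columns `C₁ = (a, c)` and `C₂ = (b, d)` sends `(x, y)` to `C₁ x + C₂ y`. The bracket
is additive in each slot and satisfies `{D₁ x, D₂ y} = x^* {D₁, D₂} y`, so its invariance only
depends on the brackets of the columns. Paravectors are fixed by reversal, so `c^* a` and `d^* b`
being paravectors says `{C₁, C₁} = {C₂, C₂} = 0`; the pseudo-determinant condition is
`{C₁, C₂} = 1`, and twisted antisymmetry then gives `{C₂, C₁} = -1`.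
-/

section StarRing

open scoped RightActions

variable {A : Type*}

section NonUnital

variable [NonUnitalRing A] [StarRing A]

/-- The skew-Hermitian form `{D₁, D₂} = x₁^* y₂ - y₁^* x₂` on pairs `Dₘ = (xₘ, yₘ)` over a ring with
involution. The bracket of the columns of a `2 × 2` matrix is its pseudo-determinant. -/
def bracket (D₁ D₂ : A × A) : A :=
  star D₁.1 * D₂.2 - star D₁.2 * D₂.1

theorem bracket_swap (D₁ D₂ : A × A) : bracket D₂ D₁ = -star (bracket D₁ D₂) := by
  simp only [bracket, star_sub, star_mul, star_star, neg_sub]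

theorem bracket_add_left (D₁ D₁' D₂ : A × A) :
    bracket (D₁ + D₁') D₂ = bracket D₁ D₂ + bracket D₁' D₂ := by
  simp only [bracket, Prod.fst_add, Prod.snd_add, star_add, add_mul]
  abel

theorem bracket_add_right (D₁ D₂ D₂' : A × A) :
    bracket D₁ (D₂ + D₂') = bracket D₁ D₂ + bracket D₁ D₂' := by
  simp only [bracket, Prod.fst_add, Prod.snd_add, mul_add]
  abel

theorem bracket_op_smul_left (D₁ D₂ : A × A) (x : A) :
    bracket (D₁ <• x) D₂ = star x * bracket D₁ D₂ := by
  simp only [bracket, Prod.smul_fst, Prod.smul_snd, op_smul_eq_mul, star_mul, mul_sub, mul_assoc]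

theorem bracket_op_smul_right (D₁ D₂ : A × A) (x : A) :
    bracket D₁ (D₂ <• x) = bracket D₁ D₂ * x := by
  simp only [bracket, Prod.smul_fst, Prod.smul_snd, op_smul_eq_mul, sub_mul, mul_assoc]

theorem bracket_self_eq_zero_iff (D : A × A) :
    bracket D D = 0 ↔ IsSelfAdjoint (star D.2 * D.1) := by
  rw [bracket, sub_eq_zero, isSelfAdjoint_iff, star_mul, star_star]

end NonUnital

variable [Ring A] [StarRing A]

theorem bracket_op_smul_add_op_smul {C₁ C₂ : A × A} (h₁ : bracket C₁ C₁ = 0)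
    (h₂ : bracket C₂ C₂ = 0) (h₁₂ : bracket C₁ C₂ = 1) (x₁ y₁ x₂ y₂ : A) :
    bracket (C₁ <• x₁ + C₂ <• y₁) (C₁ <• x₂ + C₂ <• y₂) = bracket (x₁, y₁) (x₂, y₂) := by
  have h₂₁ : bracket C₂ C₁ = -1 := by rw [bracket_swap, h₁₂, star_one]
  calc
    bracket (C₁ <• x₁ + C₂ <• y₁) (C₁ <• x₂ + C₂ <• y₂)
      = (star x₁ * bracket C₁ C₁ + star y₁ * bracket C₂ C₁) * x₂ +
          (star x₁ * bracket C₁ C₂ + star y₁ * bracket C₂ C₂) * y₂ := by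
        simp only [bracket_add_left, bracket_add_right, bracket_op_smul_left,
          bracket_op_smul_right]
    _ = bracket (x₁, y₁) (x₂, y₂) := by
        rw [h₁, h₂, h₁₂, h₂₁, bracket]
        noncomm_ring

variable (A) in
theorem bracket_antisymm_and_invariant_general :
    (∀ x₁ y₁ x₂ y₂ : A,
      star x₂ * y₁ - star y₂ * x₁ = -star (star x₁ * y₂ - star y₁ * x₂)) ∧
    (∀ a b c d x₁ y₁ x₂ y₂ : A, star a * d - star c * b = 1 →
      IsSelfAdjoint (star c * a) → IsSelfAdjoint (star d * b) →
      star (a * x₁ + b * y₁) * (c * x₂ + d * y₂) -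
          star (c * x₁ + d * y₁) * (a * x₂ + b * y₂) =
        star x₁ * y₂ - star y₁ * x₂) :=
  ⟨fun x₁ y₁ x₂ y₂ => bracket_swap (x₁, y₁) (x₂, y₂),
    fun a b c d x₁ y₁ x₂ y₂ hdet hca hdb =>
      bracket_op_smul_add_op_smul ((bracket_self_eq_zero_iff (a, c)).2 hca)
        ((bracket_self_eq_zero_iff (b, d)).2 hdb) hdet x₁ y₁ x₂ y₂⟩

end StarRing

/-- The Clifford algebra as a ring with involution `reverse`, the `x^*` of the paper. It is not an
instance, because Mathlib's `star` on a Clifford algebra is Clifford conjugation. -/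
abbrev reverseStarRing {R V : Type*} [CommRing R] [AddCommGroup V] [Module R V]
    (Q : QuadraticForm R V) : StarRing (CliffordAlgebra Q) where
  star := reverse
  star_involutive := reverse_involutive
  star_mul := reverse.map_mul
  star_add := map_add reverse

theorem reverse_eq_self_of_mem_paravec {Q : QuadraticForm ℝ M} {x : CliffordAlgebra Q}
    (hx : x ∈ paravec Q) : reverse x = x := by
  obtain ⟨_, ⟨r, rfl⟩, _, ⟨v, rfl⟩, rfl⟩ := Submodule.mem_sup.1 hx
  rw [map_add, Algebra.linearMap_apply, reverse.commutes, reverse_ι]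

/-- The bracket `{D₁, D₂} = x₁^* y₂ − y₁^* x₂` on `Cl(0,n)²` satisfies
the twisted antisymmetry `{D₂, D₁} = −{D₁, D₂}^*` and is preserved by the left action of
`SL(2, $Γ_{n+1})`. -/
theorem bracket_antisymm_and_invariant (n : ℕ) :
    (∀ x₁ y₁ x₂ y₂ : CliffordAlgebra (negQ n),
      reverse x₂ * y₁ - reverse y₂ * x₁ =
        -(reverse (reverse x₁ * y₂ - reverse y₁ * x₂))) ∧
    (∀ a b c d x₁ y₁ x₂ y₂ : CliffordAlgebra (negQ n), IsSL2 (negQ n) a b c d →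
      reverse (a * x₁ + b * y₁) * (c * x₂ + d * y₂) -
          reverse (c * x₁ + d * y₁) * (a * x₂ + b * y₂) =
        reverse x₁ * y₂ - reverse y₁ * x₂) := by
  obtain ⟨hantisymm, hinvariant⟩ :=
    @bracket_antisymm_and_invariant_general _ _ (reverseStarRing (negQ n))
  exact ⟨hantisymm, fun a b c d x₁ y₁ x₂ y₂ ⟨_, _, _, _, hdet, _, _, hca, hdb⟩ =>
    hinvariant a b c d x₁ y₁ x₂ y₂ hdet (reverse_eq_self_of_mem_paravec hca)
      (reverse_eq_self_of_mem_paravec hdb)⟩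

end PaperCliff
end
end

section
/- For a Lipschitz spinor κ = (ξ,η), the kernel of the map D ↦ {κ, D} = ξ^* y − η^* x from Cl(0,n)^2 to Cl(0,n) is exactly the set of right multiples κ a = (ξa, ηa) for a ∈ Cl(0,n). -/
/-!
An invertible paravector `p` has a nonzero real norm `conj(p) p`, and real scalars are central, so
the Clifford conjugate of any product `u` of such elements and their inverses is a nonzero real
multiple of `u⁻¹`. Hence, if `η` is invertible, `ξ η⁻¹` is a multiple of the paravector `ξ conj(η)`
and is fixed by reversal; this is the symmetry `ξ^* η = η^* ξ`. At least one of `ξ`, `η` is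
invertible, and cancelling it in `ξ^* y = η^* x` gives `a = ξ⁻¹ x` or `a = η⁻¹ y`.
-/

open CliffordAlgebra

noncomputable section

namespace PaperCliff

variable {M : Type*} [AddCommGroup M] [Module ℝ M]

theorem mul_eq_mul_iff_exists_eq_mul {R : Type*} [Monoid R] {p q ξ η x y : R} (hp : IsUnit p)
    (hξ : IsUnit ξ) (h : p * η = q * ξ) :
    p * y = q * x ↔ ∃ a, x = ξ * a ∧ y = η * a := by
  constructor
  · intro hxy
    obtain ⟨a, rfl⟩ := hξ.dvd (a := x)
    exact ⟨a, rfl, hp.mul_left_cancel (by rw [hxy, ← mul_assoc, ← h, mul_assoc])⟩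
  · rintro ⟨a, rfl, rfl⟩
    rw [← mul_assoc, h, mul_assoc]

section CommRing

variable {R V : Type*} [CommRing R] [AddCommGroup V] [Module R V] {Q : QuadraticForm R V}

theorem isUnit_reverse {x : CliffordAlgebra Q} (hx : IsUnit x) : IsUnit (reverse x) :=
  (hx.map (reverseOp (Q := Q))).unop

theorem star_mul_self_algebraMap_add_ι (r : R) (v : V) :
    star (algebraMap R (CliffordAlgebra Q) r + ι Q v) * (algebraMap R _ r + ι Q v) =
      algebraMap R _ (r * r - Q v) := by
  have hstar : star (algebraMap R (CliffordAlgebra Q) r + ι Q v) = algebraMap R _ r - ι Q v := by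
    rw [star_add, star_algebraMap, star_ι, sub_eq_add_neg]
  rw [hstar, ← (Algebra.commute_algebraMap_left r (ι Q v)).mul_self_sub_mul_self_eq', ι_sq_scalar,
    map_sub, map_mul]

end CommRing

variable {Q : QuadraticForm ℝ M}

theorem cconj_eq_star (x : CliffordAlgebra Q) : cconj x = star x :=
  (star_def x).symm

theorem mem_paravec_iff {p : CliffordAlgebra Q} :
    p ∈ paravec Q ↔ ∃ (r : ℝ) (v : M), algebraMap ℝ _ r + ι Q v = p := by
  simp [paravec, Submodule.mem_sup]

theorem reverse_eq_self_of_mem_paravec_s12 {p : CliffordAlgebra Q} (hp : p ∈ paravec Q) :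
    reverse p = p := by
  obtain ⟨r, v, rfl⟩ := mem_paravec_iff.mp hp
  simp

theorem exists_star_eq_smul_inv_of_mem_paravec {u : (CliffordAlgebra Q)ˣ}
    (hu : (u : CliffordAlgebra Q) ∈ paravec Q) : ∃ c : ℝˣ, star u = c • u⁻¹ := by
  obtain ⟨r, v, hrv⟩ := mem_paravec_iff.mp hu
  have hnorm : ((star u * u : (CliffordAlgebra Q)ˣ) : CliffordAlgebra Q) =
      algebraMap ℝ _ (r * r - Q v) := by
    rw [Units.val_mul, Units.coe_star, ← hrv, star_mul_self_algebraMap_add_ι]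
  have hc : r * r - Q v ≠ 0 := by
    intro h0
    rw [h0, map_zero] at hnorm
    exact (star u * u).ne_zero hnorm
  refine ⟨Units.mk0 _ hc, Units.ext ?_⟩
  rw [Units.val_smul, Units.smul_mk0, Algebra.smul_def, ← hnorm, Units.val_mul,
    Units.mul_inv_cancel_right]

theorem exists_star_eq_smul_inv_of_mem_lipUnits {u : (CliffordAlgebra Q)ˣ} (hu : u ∈ lipUnits Q) :
    ∃ c : ℝˣ, star u = c • u⁻¹ := by
  induction hu using Subgroup.closure_induction with
  | mem u hu => exact exists_star_eq_smul_inv_of_mem_paravec hu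
  | one => exact ⟨1, by simp⟩
  | mul u w _ _ hu hw =>
    obtain ⟨c, hc⟩ := hu
    obtain ⟨d, hd⟩ := hw
    refine ⟨d * c, Units.ext ?_⟩
    rw [star_mul, hc, hd, mul_inv_rev]
    simp only [Units.val_mul, Units.val_smul, smul_mul_smul_comm]
  | inv u _ hu =>
    obtain ⟨c, hc⟩ := hu
    exact ⟨c⁻¹, by rw [star_inv, hc, Units.smul_inv]⟩

theorem mul_cconj_mem_paravec_iff {ξ : CliffordAlgebra Q} {u : (CliffordAlgebra Q)ˣ}
    (hu : u ∈ lipUnits Q) :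
    ξ * cconj (u : CliffordAlgebra Q) ∈ paravec Q ↔
      ξ * (u⁻¹ : (CliffordAlgebra Q)ˣ) ∈ paravec Q := by
  obtain ⟨c, hc⟩ := exists_star_eq_smul_inv_of_mem_lipUnits hu
  rw [cconj_eq_star, ← Units.coe_star, hc, Units.val_smul, mul_smul_comm]
  exact Submodule.smul_mem_iff_of_isUnit _ c.isUnit

theorem IsSpinor.reverse_mul_comm {ξ η : CliffordAlgebra Q} (h : IsSpinor Q ξ η) :
    reverse ξ * η = reverse η * ξ := by
  obtain ⟨-, rfl | ⟨u, hu, rfl⟩, -, hp⟩ := h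
  · rw [map_zero, mul_zero, zero_mul]
  have hfix := reverse_eq_self_of_mem_paravec_s12 ((mul_cconj_mem_paravec_iff hu).mp hp)
  have hξ : reverse ξ = reverse (u : CliffordAlgebra Q) * (ξ * (u⁻¹ : (CliffordAlgebra Q)ˣ)) := by
    rw [← hfix, ← reverse.map_mul, Units.inv_mul_cancel_right]
  rw [hξ, mul_assoc, Units.inv_mul_cancel_right]

theorem eq_zero_or_isUnit_of_mem_lipMon {x : CliffordAlgebra Q} (hx : x ∈ lipMon Q) :
    x = 0 ∨ IsUnit x :=
  hx.imp_right fun ⟨u, _, hu⟩ => ⟨u, hu⟩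

theorem IsSpinor.isUnit_or_isUnit {ξ η : CliffordAlgebra Q} (h : IsSpinor Q ξ η) :
    IsUnit ξ ∨ IsUnit η := by
  obtain ⟨hξ, hη, hne, -⟩ := h
  rcases eq_zero_or_isUnit_of_mem_lipMon hξ with hξ0 | hξu
  · exact .inr ((eq_zero_or_isUnit_of_mem_lipMon hη).resolve_left fun hη0 => hne ⟨hξ0, hη0⟩)
  · exact .inl hξu

theorem bracket_kernel_general {ξ η : CliffordAlgebra Q} (h : IsSpinor Q ξ η)
    (x y : CliffordAlgebra Q) :
    reverse ξ * y - reverse η * x = 0 ↔ ∃ a : CliffordAlgebra Q, x = ξ * a ∧ y = η * a := by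
  rw [sub_eq_zero]
  rcases h.isUnit_or_isUnit with hξ | hη
  · exact mul_eq_mul_iff_exists_eq_mul (isUnit_reverse hξ) hξ h.reverse_mul_comm
  · rw [eq_comm, mul_eq_mul_iff_exists_eq_mul (isUnit_reverse hη) hη h.reverse_mul_comm.symm]
    simp only [and_comm]

/-- For a Lipschitz spinor `κ = (ξ,η)`, the kernel of
`(x,y) ↦ {κ, (x,y)} = ξ^* y − η^* x` is exactly the set of right multiples
`κ a = (ξ a, η a)`, `a ∈ Cl(0,n)`. -/
theorem bracket_kernel (n : ℕ) (ξ η : CliffordAlgebra (negQ n))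
    (h : IsSpinor (negQ n) ξ η) (x y : CliffordAlgebra (negQ n)) :
    reverse ξ * y - reverse η * x = 0 ↔
      ∃ a : CliffordAlgebra (negQ n), x = ξ * a ∧ y = η * a := by
  exact bracket_kernel_general h x y

end PaperCliff
end
end
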